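/- Let T and τ be real numbers with 0 < τ ≤ T, let ρ ∈ [0,1), and let A, K ≥ 0. Let g : [0,∞) → [0,∞) be a function such that (i) g(t) ≤ A for all t ∈ [0, 2T], and (ii) for every integer l ≥ 1 and every t ∈ [(l+1)T, (l+2)T], g(t) ≤ ρ · sup_{s ∈ [lT − τ, lT]} g(s) + K. Then g(t) ≤ A + K/(1 − ρ) for every t ≥ 0. -/

import Mathlib

theorem stmt_8 (T τ ρ A K : ℝ) (hτ : 0 < τ) (hτT : τ ≤ T)
    (hρ0 : 0 ≤ ρ) (hρ1 : ρ < 1) (hA : 0 ≤ A) (hK : 0 ≤ K)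
    (g : ℝ → ℝ) (hg_nonneg : ∀ t : ℝ, 0 ≤ t → 0 ≤ g t)
    (h1 : ∀ t : ℝ, 0 ≤ t → t ≤ 2 * T → g t ≤ A)
    (h2 : ∀ l : ℕ, 1 ≤ l → ∀ t : ℝ, (l + 1 : ℝ) * T ≤ t → t ≤ (l + 2 : ℝ) * T →
      g t ≤ ρ * sSup (g '' Set.Icc ((l : ℝ) * T - τ) ((l : ℝ) * T)) + K) :
    ∀ t : ℝ, 0 ≤ t → g t ≤ A + K / (1 - ρ) := by
  have hT : 0 < T := hτ.trans_le hτT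
  have hρ : 0 < 1 - ρ := sub_pos.2 hρ1
  have hB : ρ * (A + K / (1 - ρ)) + K ≤ A + K / (1 - ρ) := by
    have h : (1 - ρ) * (K / (1 - ρ)) = K := mul_div_cancel₀ K hρ.ne'
    nlinarith [mul_nonneg hρ.le hA]
  have bound (n : ℕ) : ∀ t : ℝ, 0 ≤ t → t ≤ (n + 2 : ℝ) * T → g t ≤ A + K / (1 - ρ) := by
    induction n with
    | zero =>
      intro t ht ht'
      have hAt := h1 t ht (by simpa using ht')
      have := div_nonneg hK hρ.le
      linarith
    | succ n ih =>
      intro t ht ht'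
      push_cast at ht'
      rcases le_total t ((n + 2 : ℝ) * T) with htn | htn
      · exact ih t ht htn
      have hstep := h2 (n + 1) (by omega) t (by push_cast; linarith) (by push_cast; linarith)
      have hsup : sSup (g '' Set.Icc (((n + 1 : ℕ) : ℝ) * T - τ) (((n + 1 : ℕ) : ℝ) * T)) ≤
          A + K / (1 - ρ) := by
        apply csSup_le ((Set.nonempty_Icc.2 (by linarith)).image g)
        rintro _ ⟨s, ⟨hs, hs'⟩, rfl⟩
        push_cast at hs hs'
        have : 0 ≤ (n : ℝ) * T := by positivity
        exact ih s (by linarith) (by linarith)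
      linarith [mul_le_mul_of_nonneg_left hsup hρ0]
  intro t ht
  obtain ⟨n, hn⟩ := exists_nat_ge (t / T)
  have := (div_le_iff₀ hT).1 hn
  exact bound n t ht (by linarith)
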